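/- For every infinite cardinal κ there exists a hereditarily indecomposable continuum of weight exactly κ: a nonempty compact connected Hausdorff space that is hereditarily indecomposable, admits a base for its topology of cardinality κ, and admits no base of cardinality strictly less than κ. -/

import Mathlib

open Set Topology Function

universe u

/-- A space is hereditarily indecomposable if whenever two subcontinua
(nonempty closed connected subsets) meet, one contains the other. -/
def HereditarilyIndecomposable (X : Type*) [TopologicalSpace X] : Prop :=
  ∀ A B : Set X, IsClosed A → IsConnected A → IsClosed B → IsConnected B →
    (A ∩ B).Nonempty → A ⊆ B ∨ B ⊆ A

/-!
Let `zigzag` be the piecewise linear map of the line with slopes `1`, `-1`, `1` and turning points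
`±1`. A space `Z` is hereditarily indecomposable if every continuous `f : Z → [-2, 2]` is
approximately of the form `zigzag ∘ h`. Indeed, let `f` be nonpositive on `A` and nonnegative on
`B`, with values `-2` at a point of `A` and `2` at a point of `B`. On a connected `A` the function
`h` starts below `-1` and cannot pass `-1`, where `zigzag` is `1`; on `B` it stays above `1`. So
`A` and `B` are disjoint.

Over a continuum `X`, the equation `zigzag ∘ h = f` is solved by passing to a continuum inside the
fibre product of `f` and `zigzag` that still maps onto `X`. Such a continuum exists because counting
the points of a clopen part of the fibre product over `x`, with the sign of the slope of `zigzag`,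
gives a continuous and hence constant integer. It is `0` for a part that misses a fibre and `1` for
the whole, so in any finite clopen partition some part maps onto `X`.

Starting from the cube `[0, 1]^κ`, adjoin in countably many levels solutions `h` for right-hand
sides `f` that are rational polynomials in the coordinates present so far. There are only `κ` of
these, and by Stone–Weierstrass they are dense in the continuous functions on the limit. Hence the
limit is hereditarily indecomposable of weight at most `κ`, and its weight is at least `κ` because
it maps onto the cube.
-/

/-- The piecewise linear function with slopes `1`, `-1`, `1` and turning points at `±1`. The
equation `zigzag ∘ h = f` is what forces crookedness: where `h` lies in `[-1, 1]`, it is `-f`. -/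
def zigzag (r : ℝ) : ℝ := r + |r - 1| - |r + 1|

lemma continuous_zigzag : Continuous zigzag := by
  unfold zigzag
  fun_prop

lemma zigzag_sub_two {s : ℝ} (hs : s ≤ 1) : zigzag (s - 2) = s := by
  rw [zigzag, abs_of_nonpos (by linarith), abs_of_nonpos (by linarith)]
  ring

lemma zigzag_neg_of_abs_le_one {s : ℝ} (hs : |s| ≤ 1) : zigzag (-s) = s := by
  obtain ⟨hs₁, hs₂⟩ := abs_le.mp hs
  rw [zigzag, abs_of_nonpos (by linarith), abs_of_nonneg (by linarith)]
  ring

lemma zigzag_add_two {s : ℝ} (hs : -1 ≤ s) : zigzag (s + 2) = s := by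
  rw [zigzag, abs_of_nonneg (by linarith), abs_of_nonneg (by linarith)]
  ring

lemma abs_le_abs_zigzag_add_two (r : ℝ) : |r| ≤ |zigzag r| + 2 := by
  have h : |(|r + 1| - |r - 1|)| ≤ 2 := by
    simpa only [add_sub_sub_cancel, one_add_one_eq_two, abs_two] using
      abs_abs_sub_abs_le_abs_sub (r + 1) (r - 1)
  calc |r| = |zigzag r + (|r + 1| - |r - 1|)| := by rw [zigzag]; ring_nf
    _ ≤ |zigzag r| + 2 := (abs_add_le _ _).trans (by gcongr)

/-- `Z` is a compact connected subset of `Y` that the projection `π` maps onto `X`. The condition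
that `π` be continuous is left to the lemmas that need it. -/
structure IsContinuumOver {X Y : Type*} [TopologicalSpace Y] (π : Y → X) (Z : Set Y) : Prop where
  isCompact : IsCompact Z
  isConnected : IsConnected Z
  surjOn : SurjOn π Z univ

lemma IsContinuumOver.image {X X' Y Y' : Type*} [TopologicalSpace Y] [TopologicalSpace Y']
    {π : Y → X} {π' : Y' → X'} {Z : Set Y} {φ : Y → Y'} {ψ : X → X'} (hZ : IsContinuumOver π Z)
    (hφ : Continuous φ) (hψ : Surjective ψ) (h : ∀ y, π' (φ y) = ψ (π y)) :
    IsContinuumOver π' (φ '' Z) where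
  isCompact := hZ.isCompact.image hφ
  isConnected := hZ.isConnected.image φ hφ.continuousOn
  surjOn x _ := by
    obtain ⟨x, rfl⟩ := hψ x
    obtain ⟨y, hy, rfl⟩ := hZ.surjOn (mem_univ x)
    exact ⟨φ y, mem_image_of_mem φ hy, h y⟩

section Components

variable {X P : Type*} [TopologicalSpace X] [TopologicalSpace P] [CompactSpace P] [T2Space P]

lemma exists_isClopen_subset_of_connectedComponent_subset {p : P} {U : Set P} (hU : IsOpen U)
    (h : connectedComponent p ⊆ U) : ∃ C : Set P, IsClopen C ∧ p ∈ C ∧ C ⊆ U := by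
  rw [connectedComponent_eq_iInter_isClopen] at h
  have : Nonempty {C : Set P // IsClopen C ∧ p ∈ C} := ⟨univ, isClopen_univ, mem_univ p⟩
  obtain ⟨⟨C, hC, hpC⟩, hCU⟩ := exists_subset_nhds_of_compactSpace
    (V := fun C : {C : Set P // IsClopen C ∧ p ∈ C} ↦ C.1)
    (fun C D ↦ ⟨⟨C.1 ∩ D.1, C.2.1.inter D.2.1, C.2.2, D.2.2⟩, inter_subset_left,
      inter_subset_right⟩)
    (fun C ↦ C.2.1.isClosed) (fun y hy ↦ hU.mem_nhds (h hy))
  exact ⟨C, hC, hpC, hCU⟩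

theorem exists_isContinuumOver_of_forall_discreteQuotient [T1Space X] {π : P → X}
    (hπ : Continuous π) (h : ∀ S : DiscreteQuotient P, ∃ q, SurjOn π (S.proj ⁻¹' {q}) univ) :
    ∃ Z : Set P, IsContinuumOver π Z := by
  by_contra! hno
  have hcover (p : P) : ∃ C : Set P, IsClopen C ∧ p ∈ C ∧ ¬ SurjOn π C univ := by
    have hp : ¬ SurjOn π (connectedComponent p) univ := fun hs ↦ hno (connectedComponent p)
      ⟨isClosed_connectedComponent.isCompact, isConnected_connectedComponent, hs⟩
    obtain ⟨x, -, hx⟩ := not_subset.mp hp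
    obtain ⟨C, hC, hpC, hCx⟩ := exists_isClopen_subset_of_connectedComponent_subset
      (isClosed_singleton.preimage hπ).isOpen_compl fun y hy hyx ↦ hx ⟨y, hy, hyx⟩
    refine ⟨C, hC, hpC, fun hs ↦ ?_⟩
    obtain ⟨y, hy, hyx⟩ := hs (mem_univ x)
    exact hCx hy hyx
  choose C hC hpC hCπ using hcover
  obtain ⟨t, -, ht⟩ := isCompact_univ.elim_nhds_subcover C fun p _ ↦ (hC p).isOpen.mem_nhds (hpC p)
  let S : DiscreteQuotient P := t.inf fun p ↦ .ofIsClopen (hC p)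
  obtain ⟨q, hq⟩ := h S
  obtain ⟨y, rfl⟩ := S.proj_surjective q
  obtain ⟨p, hpt, hyp⟩ := mem_iUnion₂.mp (ht (mem_univ y))
  have hS : S ≤ .ofIsClopen (hC p) := Finset.inf_le hpt
  exact hCπ p (hq.mono (fun z hz ↦ (hS (Quotient.exact hz)).mpr hyp) subset_rfl)

end Components

section Lift

/-- The sum of `g` over the solutions `r` of `zigzag r = s`, counted with the sign of the slope of
`zigzag` at `r`. At the critical values `s = ±1` the two solutions that merge cancel, so the sum
varies continuously with `s` if `g` does. -/
noncomputable def zigzagTransfer (s : ℝ) : (ℝ → ℤ) →+ ℤ where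
  toFun g := if s ≤ -1 then g (s - 2) else if s ≤ 1 then g (s - 2) - g (-s) + g (s + 2)
    else g (s + 2)
  map_zero' := by simp
  map_add' g g' := by
    simp only [Pi.add_apply]
    split_ifs <;> ring

lemma zigzagTransfer_of_le {s : ℝ} (hs : s ≤ -1) (g : ℝ → ℤ) :
    zigzagTransfer s g = g (s - 2) := if_pos hs

lemma zigzagTransfer_of_abs_le {s : ℝ} (hs : |s| ≤ 1) (g : ℝ → ℤ) :
    zigzagTransfer s g = g (s - 2) - g (-s) + g (s + 2) := by
  obtain ⟨hs₁, hs₂⟩ := abs_le.mp hs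
  obtain rfl | hs₁ := hs₁.eq_or_lt
  · norm_num [zigzagTransfer]
  · simp [zigzagTransfer, hs₁.not_ge, hs₂]

lemma zigzagTransfer_of_ge {s : ℝ} (hs : 1 ≤ s) (g : ℝ → ℤ) :
    zigzagTransfer s g = g (s + 2) := by
  obtain rfl | hs := hs.eq_or_lt
  · norm_num [zigzagTransfer]
  · simp [zigzagTransfer, hs.not_ge, (show -1 < s by linarith).not_ge]

lemma zigzagTransfer_one (s : ℝ) : zigzagTransfer s 1 = 1 := by
  simp [zigzagTransfer]

lemma zigzagTransfer_congr {s : ℝ} {g g' : ℝ → ℤ} (h : ∀ r, zigzag r = s → g r = g' r) :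
    zigzagTransfer s g = zigzagTransfer s g' := by
  obtain hs | hs := le_total s (-1)
  · rw [zigzagTransfer_of_le hs, zigzagTransfer_of_le hs, h _ (zigzag_sub_two (by linarith))]
  obtain hs' | hs' := le_total s 1
  · have hs₁ := abs_le.mpr ⟨hs, hs'⟩
    rw [zigzagTransfer_of_abs_le hs₁, zigzagTransfer_of_abs_le hs₁, h _ (zigzag_sub_two hs'),
      h _ (zigzag_neg_of_abs_le_one hs₁), h _ (zigzag_add_two hs)]
  · rw [zigzagTransfer_of_ge hs', zigzagTransfer_of_ge hs', h _ (zigzag_add_two hs)]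

/-- The fibre product of `f` and `zigzag`. A section of it solves `zigzag ∘ h = f`. -/
def zigzagPullback {X : Type*} (f : X → ℝ) : Set (X × ℝ) :=
  {p | zigzag p.2 = f p.1}

variable {X : Type*} [TopologicalSpace X] {f : X → ℝ}

lemma continuous_zigzagTransfer {g : X × ℝ → ℤ} (hf : Continuous f)
    (hg : ContinuousOn g (zigzagPullback f)) :
    Continuous fun x ↦ zigzagTransfer (f x) fun r ↦ g (x, r) := by
  have hlow : ContinuousOn (fun x ↦ g (x, f x - 2)) {x | f x ≤ 1} :=
    hg.comp (by fun_prop) fun x hx ↦ zigzag_sub_two hx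
  have hmid : ContinuousOn (fun x ↦ g (x, -f x)) {x | |f x| ≤ 1} :=
    hg.comp (by fun_prop) fun x hx ↦ zigzag_neg_of_abs_le_one hx
  have hhigh : ContinuousOn (fun x ↦ g (x, f x + 2)) {x | -1 ≤ f x} :=
    hg.comp (by fun_prop) fun x hx ↦ zigzag_add_two hx
  have hcover : {x | f x ≤ -1} ∪ {x | |f x| ≤ 1} ∪ {x | 1 ≤ f x} = univ := by
    refine eq_univ_of_forall fun x ↦ ?_
    simp only [mem_union, mem_ofPred_eq, abs_le]
    grind
  rw [← continuousOn_univ, ← hcover]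
  have hlow_closed : IsClosed {x | f x ≤ -1} := isClosed_le hf continuous_const
  have hmid_closed : IsClosed {x | |f x| ≤ 1} := isClosed_le hf.abs continuous_const
  have hhigh_closed : IsClosed {x | 1 ≤ f x} := isClosed_le continuous_const hf
  refine (ContinuousOn.union_of_isClosed ?_ ?_ hlow_closed hmid_closed).union_of_isClosed ?_
    (hlow_closed.union hmid_closed) hhigh_closed
  · exact (hlow.mono fun x (hx : f x ≤ -1) ↦ show f x ≤ 1 by linarith).congr
      fun x hx ↦ zigzagTransfer_of_le hx _
  · have hsum := ((hlow.mono fun x (hx : |f x| ≤ 1) ↦ (abs_le.mp hx).2).sub hmid).add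
      (hhigh.mono fun x (hx : |f x| ≤ 1) ↦ (abs_le.mp hx).1)
    exact hsum.congr fun x hx ↦ zigzagTransfer_of_abs_le hx _
  · exact (hhigh.mono fun x (hx : 1 ≤ f x) ↦ show -1 ≤ f x by linarith).congr
      fun x hx ↦ zigzagTransfer_of_ge hx _

lemma zigzagTransfer_indicator_eq_zero [PreconnectedSpace X] {C : Set (zigzagPullback f)}
    (hf : Continuous f) (hC : IsClopen C) (hCX : ¬ SurjOn (fun p ↦ p.1.1) C univ) (x : X) :
    zigzagTransfer (f x) (fun r ↦ (Subtype.val '' C).indicator 1 (x, r)) = 0 := by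
  have hcont : ContinuousOn ((Subtype.val '' C).indicator (1 : X × ℝ → ℤ)) (zigzagPullback f) := by
    rw [continuousOn_iff_continuous_domRestrict]
    exact (hC.continuous_indicator (f := 1) continuous_const).congr fun p ↦
      (indicator_image (f := 1) Subtype.val_injective).symm
  obtain ⟨x₀, -, hx₀⟩ := not_subset.mp hCX
  calc zigzagTransfer (f x) (fun r ↦ (Subtype.val '' C).indicator 1 (x, r))
      = zigzagTransfer (f x₀) (fun r ↦ (Subtype.val '' C).indicator 1 (x₀, r)) :=
        PreconnectedSpace.constant ‹_› (continuous_zigzagTransfer hf hcont)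
    _ = zigzagTransfer (f x₀) 0 := zigzagTransfer_congr fun _ _ ↦ indicator_of_notMem
        (by rintro ⟨p, hp, hpr⟩; exact hx₀ ⟨p, hp, congrArg Prod.fst hpr⟩) _
    _ = 0 := map_zero _

lemma exists_surjOn_fiber_of_discreteQuotient [ConnectedSpace X] (hf : Continuous f)
    (S : DiscreteQuotient (zigzagPullback f)) [Finite S] :
    ∃ q, SurjOn (fun p ↦ p.1.1) (S.proj ⁻¹' {q}) univ := by
  classical
  have := Fintype.ofFinite S
  by_contra! hno
  obtain ⟨x⟩ := ‹ConnectedSpace X›.toNonempty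
  let χ (q : S) : X × ℝ → ℤ := (Subtype.val '' (S.proj ⁻¹' {q})).indicator 1
  have hχ (r : ℝ) (hr : zigzag r = f x) : 1 = (∑ q, fun r ↦ χ q (x, r)) r := by
    have hfiber (q : S) : χ q (x, r) = (S.proj ⁻¹' {q}).indicator 1 ⟨(x, r), hr⟩ :=
      indicator_image (f := 1) (x := (⟨(x, r), hr⟩ : zigzagPullback f)) Subtype.val_injective
    simp [hfiber, indicator_apply]
  have : (1 : ℤ) = 0 :=
    calc 1 = zigzagTransfer (f x) 1 := (zigzagTransfer_one _).symm
      _ = zigzagTransfer (f x) (∑ q, fun r ↦ χ q (x, r)) := zigzagTransfer_congr hχ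
      _ = ∑ q, zigzagTransfer (f x) (fun r ↦ χ q (x, r)) := map_sum _ _ _
      _ = 0 := Finset.sum_eq_zero fun q _ ↦
        zigzagTransfer_indicator_eq_zero hf (S.isClopen_preimage {q}) (hno q) x
  exact one_ne_zero this

variable [CompactSpace X]

lemma isCompact_zigzagPullback (hf : Continuous f) : IsCompact (zigzagPullback f) := by
  obtain ⟨C, hC⟩ := isCompact_univ.exists_bound_of_continuousOn hf.continuousOn
  refine (isCompact_univ.prod (isCompact_Icc (a := -(C + 2)) (b := C + 2))).of_isClosed_subset
    (isClosed_eq (continuous_zigzag.comp continuous_snd) (hf.comp continuous_fst))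
    fun p hp ↦ ⟨mem_univ _, abs_le.mp ?_⟩
  calc |p.2| ≤ |zigzag p.2| + 2 := abs_le_abs_zigzag_add_two _
    _ = |f p.1| + 2 := by rw [hp.out]
    _ ≤ C + 2 := by gcongr; exact hC _ (mem_univ _)

theorem exists_subset_zigzagPullback_isContinuumOver [T2Space X] [ConnectedSpace X]
    (hf : Continuous f) : ∃ Z ⊆ zigzagPullback f, IsContinuumOver Prod.fst Z := by
  have : CompactSpace (zigzagPullback f) :=
    isCompact_iff_compactSpace.mp (isCompact_zigzagPullback hf)
  obtain ⟨Z, hZ⟩ := exists_isContinuumOver_of_forall_discreteQuotient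
    (continuous_fst.comp continuous_subtype_val)
    fun S ↦ exists_surjOn_fiber_of_discreteQuotient hf S
  exact ⟨_, Subtype.coe_image_subset _ Z,
    hZ.image continuous_subtype_val surjective_id fun _ ↦ rfl⟩

end Lift

section Limit

open TopologicalSpace

variable {X Y : Type*} [TopologicalSpace X] [TopologicalSpace Y] [T2Space Y]

lemma isClosed_nonemptyCompacts_isConnected :
    IsClosed {L : NonemptyCompacts Y | IsConnected (L : Set Y)} := by
  refine isOpen_compl_iff.mp (isOpen_iff_mem_nhds.mpr fun L hL ↦ ?_)
  have hL' : ¬ IsPreconnected (L : Set Y) := fun h ↦ hL ⟨L.nonempty, h⟩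
  rw [isPreconnected_closed_iff] at hL'
  push Not at hL'
  obtain ⟨A, B, hA, hB, hLAB, hLA, hLB, hAB⟩ := hL'
  obtain ⟨U, V, hU, hV, hAU, hBV, hUV⟩ : SeparatedNhds (L ∩ A) (L ∩ B) :=
    SeparatedNhds.of_isCompact_isCompact (L.isCompact.inter_right hA) (L.isCompact.inter_right hB)
      (by rw [disjoint_iff_inter_eq_empty, ← inter_inter_distrib_left, hAB])
  have hLUV : (L : Set Y) ⊆ U ∪ V := fun y hy ↦
    (hLAB hy).imp (fun h ↦ hAU ⟨hy, h⟩) fun h ↦ hBV ⟨hy, h⟩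
  filter_upwards [(NonemptyCompacts.isOpen_subsets_of_isOpen (hU.union hV)).mem_nhds hLUV,
    (NonemptyCompacts.isOpen_inter_nonempty_of_isOpen hU).mem_nhds
      (hLA.mono (subset_inter inter_subset_left hAU)),
    (NonemptyCompacts.isOpen_inter_nonempty_of_isOpen hV).mem_nhds
      (hLB.mono (subset_inter inter_subset_left hBV))] with L' hsub hmU hmV hconn
  obtain ⟨y, -, hyU, hyV⟩ := hconn.isPreconnected U V hU hV hsub hmU hmV
  exact hUV.le_bot ⟨hyU, hyV⟩

theorem exists_isContinuumOver_forall_subset [T1Space X] {J : Type*} {π : Y → X}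
    (hπ : Continuous π) {K : Set Y} (hK : IsCompact K) {t : J → Set Y} (ht : ∀ j, IsClosed (t j))
    (h : ∀ F : Finset J, ∃ W ⊆ K, IsContinuumOver π W ∧ ∀ j ∈ F, W ⊆ t j) :
    ∃ Z, IsContinuumOver π Z ∧ ∀ j, Z ⊆ t j := by
  have hover : IsClosed {L : NonemptyCompacts Y | IsContinuumOver π (L : Set Y)} := by
    have hfiber (x : X) := NonemptyCompacts.isClosed_inter_nonempty_of_isClosed
      (isClosed_singleton (x := x) |>.preimage hπ)
    convert! isClosed_nonemptyCompacts_isConnected.inter (isClosed_iInter hfiber) using 1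
    ext L
    simp only [mem_inter_iff, mem_iInter, mem_ofPred_eq]
    exact ⟨fun hL ↦ ⟨hL.isConnected, fun x ↦ hL.surjOn (mem_univ x)⟩,
      fun hL ↦ ⟨L.isCompact, hL.1, fun x _ ↦ hL.2 x⟩⟩
  obtain ⟨Z, ⟨-, hZ⟩, hZt⟩ :=
    ((NonemptyCompacts.isCompact_subsets_of_isCompact hK).inter_right hover).inter_iInter_nonempty
      (fun j ↦ {L | (L : Set Y) ⊆ t j})
      (fun j ↦ NonemptyCompacts.isClosed_subsets_of_isClosed (ht j)) fun F ↦ by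
      obtain ⟨W, hWK, hW, hWt⟩ := h F
      exact ⟨⟨⟨W, hW.isCompact⟩, hW.isConnected.nonempty⟩, ⟨hWK, hW⟩, mem_iInter₂.mpr hWt⟩
  exact ⟨Z, hZ, mem_iInter.mp hZt⟩

end Limit

section Tower

open scoped BoundedContinuousFunction

variable {X J : Type*} [TopologicalSpace X] [T2Space X]

lemma IsContinuumOver.exists_update [DecidableEq J] {W : Set (X × (J → ℝ))}
    (hW : IsContinuumOver Prod.fst W) {f : X × (J → ℝ) → ℝ} (hf : Continuous f) (j : J) :
    ∃ W' : Set (X × (J → ℝ)), IsContinuumOver Prod.fst W' ∧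
      ∀ p ∈ W', ∃ w ∈ W, ∃ r, p = (w.1, update w.2 j r) ∧ zigzag r = f w := by
  have := isCompact_iff_compactSpace.mp hW.isCompact
  have := isConnected_iff_connectedSpace.mp hW.isConnected
  obtain ⟨Z, hZf, hZ⟩ :=
    exists_subset_zigzagPullback_isContinuumOver (hf.comp (continuous_subtype_val (p := (· ∈ W))))
  let φ (z : W × ℝ) : X × (J → ℝ) := (z.1.1.1, update z.1.1.2 j z.2)
  have hφ : Continuous φ := by fun_prop
  have hbase : Surjective fun w : W ↦ w.1.1 := fun x ↦ by
    obtain ⟨w, hwW, hw⟩ := hW.surjOn (mem_univ x)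
    exact ⟨⟨w, hwW⟩, hw⟩
  refine ⟨φ '' Z, hZ.image hφ hbase fun _ ↦ rfl, ?_⟩
  rintro _ ⟨z, hzZ, rfl⟩
  exact ⟨z.1, z.1.2, z.2, rfl, hZf hzZ⟩

variable [CompactSpace X] [ConnectedSpace X] {α : Type*} [LinearOrder α]
  (ℓ : J → α) (g : J → (X × (J → ℝ) →ᵇ ℝ))

lemma exists_isContinuumOver_forall_mem_finset_zigzag_eq
    (hg : ∀ j x, DependsOn (fun y ↦ g j (x, y)) {i | ℓ i < ℓ j}) (F : Finset J) :
    ∃ W ⊆ {p : X × (J → ℝ) | ∀ j, |p.2 j| ≤ ‖g j‖ + 2}, IsContinuumOver Prod.fst W ∧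
      ∀ p ∈ W, ∀ j ∈ F, zigzag (p.2 j) = g j p := by
  classical
  induction F using Finset.induction_on_max_value ℓ with
  | empty =>
    have hcont : Continuous fun x : X ↦ (x, (0 : J → ℝ)) := by fun_prop
    refine ⟨range fun x ↦ (x, 0), ?_, ⟨isCompact_range hcont, isConnected_range hcont, ?_⟩, ?_⟩
    · rintro _ ⟨x, rfl⟩ j
      simp only [Pi.zero_apply, abs_zero]
      positivity
    · exact fun x _ ↦ ⟨(x, 0), mem_range_self x, rfl⟩
    · simp
  | insert j F hjF hmax ih =>
    obtain ⟨W, hWbox, hW, hWF⟩ := ih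
    obtain ⟨W', hW', hWW'⟩ := hW.exists_update (g j).continuous j
    have hinvariant (w : X × (J → ℝ)) (r : ℝ) {i : J} (hi : ℓ i ≤ ℓ j) :
        g i (w.1, update w.2 j r) = g i w :=
      hg i w.1 fun k hk ↦ update_of_ne (ne_of_apply_ne ℓ (hk.trans_le hi).ne) ..
    refine ⟨W', fun p hp i ↦ ?_, hW', fun p hp i hi ↦ ?_⟩ <;>
      obtain ⟨w, hwW, r, rfl, hr⟩ := hWW' p hp
    · obtain rfl | hij := eq_or_ne i j
      · calc |update w.2 i r i| = |r| := by rw [update_self]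
          _ ≤ |zigzag r| + 2 := abs_le_abs_zigzag_add_two r
          _ ≤ ‖g i‖ + 2 := by rw [hr]; gcongr; exact (g i).norm_coe_le_norm w
      · simpa only [update_of_ne hij] using hWbox hwW i
    · obtain rfl | hiF := Finset.mem_insert.mp hi
      · simp only [update_self, hr, hinvariant w r le_rfl]
      · have hij : i ≠ j := ne_of_mem_of_not_mem hiF hjF
        simp only [update_of_ne hij, hWF w hwW i hiF, hinvariant w r (hmax i hiF)]

theorem exists_isContinuumOver_forall_zigzag_eq
    (hg : ∀ j x, DependsOn (fun y ↦ g j (x, y)) {i | ℓ i < ℓ j}) :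
    ∃ Z : Set (X × (J → ℝ)), IsContinuumOver Prod.fst Z ∧
      ∀ p ∈ Z, ∀ j, zigzag (p.2 j) = g j p := by
  have hbox : IsCompact {p : X × (J → ℝ) | ∀ j, |p.2 j| ≤ ‖g j‖ + 2} := by
    convert! (isCompact_univ (X := X)).prod
      (isCompact_univ_pi fun j ↦ isCompact_Icc (a := -(‖g j‖ + 2)) (b := ‖g j‖ + 2)) using 1
    ext p
    simp only [mem_prod, mem_univ, true_and, mem_univ_pi, mem_Icc, abs_le, mem_ofPred_eq]
  obtain ⟨Z, hZ, hZg⟩ := exists_isContinuumOver_forall_subset continuous_fst hbox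
    (t := fun j ↦ {p | zigzag (p.2 j) = g j p})
    (fun j ↦ isClosed_eq (continuous_zigzag.comp (by fun_prop)) (g j).continuous) fun F ↦ by
    obtain ⟨W, hWbox, hW, hWF⟩ := exists_isContinuumOver_forall_mem_finset_zigzag_eq ℓ g hg F
    exact ⟨W, hWbox, hW, fun j hj p hp ↦ hWF p hp j hj⟩
  exact ⟨Z, hZ, fun p hp j ↦ hZg j hp⟩

end Tower

section Criterion

lemma lt_neg_one_of_zigzag_lt_neg_one {r : ℝ} (hr : zigzag r < -1) : r < -1 := by
  by_contra! h
  rw [zigzag, abs_of_nonneg (by linarith : 0 ≤ r + 1)] at hr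
  linarith [abs_nonneg (r - 1)]

lemma zigzag_neg (r : ℝ) : zigzag (-r) = -zigzag r := by
  simp only [zigzag, ← abs_neg (-r - 1), ← abs_neg (-r + 1)]
  ring_nf

variable {Z : Type*} [TopologicalSpace Z]

lemma lt_neg_one_of_zigzag_lt {A : Set Z} {h : Z → ℝ} {a p : Z} (hA : IsPreconnected A)
    (hh : Continuous h) (hzA : ∀ z ∈ A, zigzag (h z) < 1) (ha : a ∈ A)
    (hza : zigzag (h a) < -1) (hp : p ∈ A) : h p < -1 := by
  by_contra! hp'
  obtain ⟨z, hz, hz'⟩ := hA.intermediate_value ha hp hh.continuousOn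
    ⟨(lt_neg_one_of_zigzag_lt_neg_one hza).le, hp'⟩
  have hz₁ : zigzag (h z) = 1 := by rw [hz', zigzag_neg_of_abs_le_one abs_one.le]
  exact (hzA z hz).ne hz₁

lemma exists_continuous_nonpos_nonneg_of_isClosed [T4Space Z] {A B : Set Z} {a b : Z}
    (hA : IsClosed A) (hB : IsClosed B) (haA : a ∈ A) (haB : a ∉ B) (hbB : b ∈ B) (hbA : b ∉ A) :
    ∃ f : C(Z, ℝ), (∀ z, |f z| ≤ 2) ∧ (∀ z ∈ A, f z ≤ 0) ∧ (∀ z ∈ B, 0 ≤ f z) ∧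
      f a = -2 ∧ f b = 2 := by
  obtain ⟨u, hua, huB, hu⟩ := exists_continuous_zero_one_of_isClosed isClosed_singleton hB
    (disjoint_singleton_left.mpr haB)
  obtain ⟨v, hvA, hvb, hv⟩ := exists_continuous_zero_one_of_isClosed hA isClosed_singleton
    (disjoint_singleton_right.mpr hbA)
  simp only [EqOn, mem_singleton_iff, forall_eq, Pi.zero_apply, Pi.one_apply, mem_Icc]
    at hua huB hvA hvb hu hv
  refine ⟨⟨fun z ↦ 2 * (u z + v z - 1), by fun_prop⟩, fun z ↦ abs_le.mpr ?_, fun z hz ↦ ?_,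
    fun z hz ↦ ?_, ?_, ?_⟩ <;> dsimp only [ContinuousMap.coe_mk]
  · constructor <;> linarith [hu z, hv z]
  · linarith [hvA hz, hu z]
  · linarith [huB hz, hv z]
  · linarith [hvA haA]
  · linarith [huB hbB]

theorem hereditarilyIndecomposable_of_approx_zigzag [T4Space Z]
    (H : ∀ f : C(Z, ℝ), (∀ z, |f z| ≤ 2) → ∃ h : C(Z, ℝ), ∀ z, |zigzag (h z) - f z| < 1) :
    HereditarilyIndecomposable Z := by
  rintro A B hAcl hA hBcl hB ⟨p, hpA, hpB⟩
  by_contra! hAB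
  obtain ⟨a, haA, haB⟩ := not_subset.mp hAB.1
  obtain ⟨b, hbB, hbA⟩ := not_subset.mp hAB.2
  obtain ⟨f, hf, hfA, hfB, hfa, hfb⟩ :=
    exists_continuous_nonpos_nonneg_of_isClosed hAcl hBcl haA haB hbB hbA
  obtain ⟨h, hh⟩ := H f hf
  simp only [abs_lt] at hh
  have hp_lt : h p < -1 := lt_neg_one_of_zigzag_lt hA.isPreconnected h.continuous
    (fun z hz ↦ by linarith [(hh z).2, hfA z hz]) haA (by linarith [(hh a).2]) hpA
  have hp_gt : -h p < -1 := lt_neg_one_of_zigzag_lt (h := fun z ↦ -h z) hB.isPreconnected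
    h.continuous.neg (fun z hz ↦ by linarith [(hh z).1, hfB z hz, zigzag_neg (h z)]) hbB
    (by linarith [(hh b).1, zigzag_neg (h b)]) hpB
  linarith

end Criterion

section StoneWeierstrass

open MvPolynomial

variable {Z : Type*} [TopologicalSpace Z] [CompactSpace Z]

theorem dense_of_separatesPoints_subalgebra_rat (A : Subalgebra ℚ C(Z, ℝ))
    (hA : A.SeparatesPoints) : Dense (A : Set C(Z, ℝ)) := by
  let A' : Subalgebra ℝ C(Z, ℝ) :=
    { A.topologicalClosure with
      algebraMap_mem' := fun r ↦ map_mem_closure (continuous_algebraMap ℝ C(Z, ℝ))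
        (Rat.denseRange_cast r) (by
          rintro _ ⟨q, rfl⟩
          exact A.algebraMap_mem q) }
  have hA' : A'.SeparatesPoints := fun x y hxy ↦ by
    obtain ⟨_, ⟨f, hf, rfl⟩, hfxy⟩ := hA hxy
    exact ⟨f, ⟨f, subset_closure hf, rfl⟩, hfxy⟩
  have htop := ContinuousMap.subalgebra_topologicalClosure_eq_top_of_separatesPoints A' hA'
  refine dense_iff_closure_eq.mpr ?_
  calc closure (A : Set C(Z, ℝ)) = closure (closure A) := closure_closure.symm
    _ = A'.topologicalClosure := rfl
    _ = univ := by rw [htop, Algebra.coe_top]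

theorem denseRange_aeval_of_separatesPoints {σ : Type*} {c : σ → C(Z, ℝ)}
    (hc : ∀ ⦃x y⦄, x ≠ y → ∃ s, c s x ≠ c s y) :
    DenseRange (aeval c : MvPolynomial σ ℚ → C(Z, ℝ)) := by
  refine dense_of_separatesPoints_subalgebra_rat (aeval c).range fun x y hxy ↦ ?_
  obtain ⟨s, hs⟩ := hc hxy
  exact ⟨c s, ⟨c s, ⟨X s, aeval_X c s⟩, rfl⟩, hs⟩

lemma aeval_continuousMap_apply {R X S σ : Type*} [TopologicalSpace X] [CommSemiring R]
    [CommSemiring S] [TopologicalSpace S] [IsTopologicalSemiring S] [Algebra R S]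
    (c : σ → C(X, S)) (P : MvPolynomial σ R) (x : X) : aeval c P x = aeval (fun s ↦ c s x) P :=
  comp_aeval_apply c (ContinuousMap.evalAlgHom R S x) P

end StoneWeierstrass

section Weight

open TopologicalSpace Cardinal

theorem isTopologicalBasis_range_of_denseRange {Z ι : Type*} [TopologicalSpace Z] [CompactSpace Z]
    [T2Space Z] {d : ι → C(Z, ℝ)} (hd : DenseRange d) :
    IsTopologicalBasis (range fun i ↦ {z | 0 < d i z}) := by
  refine isTopologicalBasis_of_isOpen_of_nhds ?_ fun z U hz hU ↦ ?_
  · rintro _ ⟨i, rfl⟩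
    exact isOpen_lt continuous_const (d i).continuous
  obtain ⟨f, hfU, hfz, -⟩ := exists_continuous_zero_one_of_isClosed hU.isClosed_compl
    isClosed_singleton (disjoint_singleton_right.mpr (not_not_intro hz))
  obtain ⟨i, hi⟩ := hd.exists_dist_lt ⟨fun w ↦ 2 * f w - 1, by fun_prop⟩ one_pos
  have hi (w : Z) : |2 * f w - 1 - d i w| < 1 := (ContinuousMap.dist_apply_le_dist w).trans_lt hi
  refine ⟨_, mem_range_self i, ?_, fun w hw ↦ by_contra fun hwU ↦ ?_⟩
  · have hfz : f z = 1 := hfz rfl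
    have := (abs_lt.mp (hi z)).2
    change 0 < d i z
    linarith
  · have hfw : f w = 0 := hfU hwU
    have := (abs_lt.mp (hi w)).1
    linarith [hw.out]

theorem mk_le_mk_of_isTopologicalBasis {Z ι : Type u} [TopologicalSpace Z] {B : Set (Set Z)}
    (hB : IsTopologicalBasis B) {z : ι → Z} {U : ι → Set Z} (hU : ∀ i, IsOpen (U i))
    (hz : ∀ i j, z i ∈ U j ↔ i = j) : #ι ≤ #B := by
  choose b hbB hzb hbU using fun i ↦ hB.exists_subset_of_mem_open ((hz i i).mpr rfl) (hU i)
  have hb : Injective b := fun i j hij ↦ (hz i j).mp (hbU j (hij ▸ hzb i))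
  exact mk_le_of_injective (hb.codRestrict hbB)

theorem mk_le_mk_of_isTopologicalBasis_of_surjective {Z ι : Type u} [TopologicalSpace Z]
    {B : Set (Set Z)} (hB : IsTopologicalBasis B) {π : Z → ι → unitInterval} (hπ : Continuous π)
    (hπ_surj : Surjective π) : #ι ≤ #B := by
  classical
  choose z hz using fun i : ι ↦ hπ_surj (Pi.single i 1)
  refine mk_le_mk_of_isTopologicalBasis hB (z := z) (U := fun j ↦ {w | 0 < π w j})
    (fun j ↦ isOpen_lt continuous_const (by fun_prop)) fun i j ↦ ?_
  obtain rfl | hij := eq_or_ne i j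
  · simp [hz]
  · simp [hz, hij, hij.symm]

end Weight

section Cover

universe v

open MvPolynomial Cardinal
open scoped BoundedContinuousFunction

/-- Truncation of real numbers to `[-2, 2]`, a range that suffices for the right-hand sides `f` of
`zigzag ∘ h = f`. -/
noncomputable def clampTwo : ℝ →ᵇ ℝ :=
  .ofNormedAddCommGroup (fun r ↦ projIcc (-2 : ℝ) 2 (by norm_num) r) (by fun_prop) 2
    fun r ↦ abs_le.mpr (projIcc (-2 : ℝ) 2 _ r).2

lemma abs_clampTwo_sub_le {r s : ℝ} (hs : |s| ≤ 2) : |clampTwo r - s| ≤ |r - s| := by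
  have hs' : (projIcc (-2 : ℝ) 2 (by norm_num) s : ℝ) = s :=
    congrArg Subtype.val (projIcc_of_mem _ (abs_le.mp hs))
  calc |clampTwo r - s| = |clampTwo r - projIcc (-2 : ℝ) 2 (by norm_num) s| := by rw [hs']
    _ ≤ |r - s| := abs_projIcc_sub_projIcc _

variable {X : Type*} {ι : Type u} [TopologicalSpace X] (φ : ι → C(X, ℝ))

/-- The coordinate functions on `X × (ι × ℕ → ℝ)`, with the functions `φ` as coordinates on `X`,
where the coordinates indexed by `(i, m)` with `n ≤ m` are replaced by zero. A polynomial in them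
can be the right-hand side of the equation for a coordinate of level `n`. -/
noncomputable def truncCoord (n : ℕ) : ι ⊕ ι × ℕ → C(X × (ι × ℕ → ℝ), ℝ) :=
  Sum.elim (fun i ↦ (φ i).comp .fst) fun j ↦ if j.2 < n then ⟨fun p ↦ p.2 j, by fun_prop⟩ else 0

variable {φ}

lemma aeval_truncCoord {n : ℕ} {P : MvPolynomial (ι ⊕ ι × ℕ) ℚ}
    (hP : ∀ j, Sum.inr j ∈ P.vars → j.2 < n) (p : X × (ι × ℕ → ℝ)) :
    aeval (truncCoord φ n) P p = aeval (Sum.elim (fun i ↦ φ i p.1) p.2) P := by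
  rw [aeval_continuousMap_apply]
  refine eval₂Hom_congr' rfl (fun s hs _ ↦ ?_) rfl
  cases s with
  | inl i => rfl
  | inr j => simp [truncCoord, hP j hs]

lemma dependsOn_aeval_truncCoord (n : ℕ) (P : MvPolynomial (ι ⊕ ι × ℕ) ℚ) (x : X) :
    DependsOn (fun y ↦ aeval (truncCoord φ n) P (x, y)) {j | j.2 < n} := fun y y' hy ↦ by
  simp only [aeval_continuousMap_apply]
  congr 2 with s
  rcases s with i | j
  · rfl
  · by_cases hj : j.2 < n
    · simpa [truncCoord, hj] using hy j hj
    · simp [truncCoord, hj]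

lemma exists_forall_inr_mem_vars_lt (P : MvPolynomial (ι ⊕ ι × ℕ) ℚ) :
    ∃ n, ∀ j, Sum.inr j ∈ P.vars → j.2 < n :=
  ⟨P.vars.sup (Sum.elim 0 fun j ↦ j.2 + 1), fun _ hj ↦
    Nat.lt_of_succ_le (Finset.le_sup (f := Sum.elim 0 fun j : ι × ℕ ↦ j.2 + 1) hj)⟩

lemma exists_surjective_mvPolynomial {R : Type v} {σ : Type u} [CommSemiring R] [Countable R]
    [Infinite ι] (hσ : #σ ≤ #ι) : ∃ e : ι → MvPolynomial σ R, Surjective e := by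
  have hR : lift.{u} #R ≤ ℵ₀ := lift_le_aleph0.mpr mk_le_aleph0
  have hι : ℵ₀ ≤ lift.{v} #ι := aleph0_le_lift.mpr (aleph0_le_mk ι)
  obtain ⟨e⟩ : #(MvPolynomial σ R) ≤ #(ULift.{v} ι) := by
    rw [mk_uLift]
    exact cardinalMk_le_max_lift.trans (max_le (max_le (hR.trans hι) (lift_le.mpr hσ)) hι)
  exact ⟨_, (invFun_surjective (e.trans Equiv.ulift.toEmbedding).injective)⟩

lemma denseRange_restrict_aeval_truncCoord (hφ : ∀ ⦃x y⦄, x ≠ y → ∃ i, φ i x ≠ φ i y)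
    {e : ι → MvPolynomial (ι ⊕ ι × ℕ) ℚ} (he : Surjective e) (Z : Set (X × (ι × ℕ → ℝ)))
    [CompactSpace Z] :
    DenseRange fun j : ι × ℕ ↦ (aeval (truncCoord φ j.2) (e j.1)).restrict Z := by
  let c : ι ⊕ ι × ℕ → C(Z, ℝ) := Sum.elim (fun i ↦ ⟨fun z ↦ φ i z.1.1, by fun_prop⟩)
    fun j ↦ ⟨fun z ↦ z.1.2 j, by fun_prop⟩
  have hc : ∀ ⦃z w⦄, z ≠ w → ∃ s, c s z ≠ c s w := fun z w hzw ↦ by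
    contrapose! hzw with hcon
    refine Subtype.ext (Prod.ext ?_ (funext fun j ↦ hcon (.inr j)))
    by_contra hne
    obtain ⟨i, hi⟩ := hφ hne
    exact hi (hcon (.inl i))
  refine (denseRange_aeval_of_separatesPoints hc).mono ?_
  rintro _ ⟨P, rfl⟩
  obtain ⟨i, rfl⟩ := he P
  obtain ⟨n, hn⟩ := exists_forall_inr_mem_vars_lt (e i)
  refine ⟨(i, n), ContinuousMap.ext fun z ↦ ?_⟩
  rw [ContinuousMap.restrict_apply, aeval_truncCoord hn, aeval_continuousMap_apply]
  congr 2 with s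
  cases s <;> rfl

theorem exists_hereditarilyIndecomposable_isContinuumOver {X ι : Type u} [TopologicalSpace X]
    [CompactSpace X] [T2Space X] [ConnectedSpace X] [Infinite ι] {φ : ι → C(X, ℝ)}
    (hφ : ∀ ⦃x y⦄, x ≠ y → ∃ i, φ i x ≠ φ i y) :
    ∃ Z : Set (X × (ι × ℕ → ℝ)), IsContinuumOver Prod.fst Z ∧ HereditarilyIndecomposable Z ∧
      ∃ B : Set (Set Z), TopologicalSpace.IsTopologicalBasis B ∧ #B ≤ #ι := by
  obtain ⟨e, he⟩ : ∃ e : ι → MvPolynomial (ι ⊕ ι × ℕ) ℚ, Surjective e :=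
    exists_surjective_mvPolynomial (by simp)
  let q (j : ι × ℕ) : C(X × (ι × ℕ → ℝ), ℝ) := aeval (truncCoord φ j.2) (e j.1)
  obtain ⟨Z, hZ, hzigzag⟩ := exists_isContinuumOver_forall_zigzag_eq Prod.snd
    (fun j ↦ clampTwo.compContinuous (q j))
    fun j x _ _ h ↦ congrArg clampTwo (dependsOn_aeval_truncCoord j.2 (e j.1) x h)
  have : CompactSpace Z := isCompact_iff_compactSpace.mp hZ.isCompact
  have hdense : DenseRange fun j ↦ (q j).restrict Z := denseRange_restrict_aeval_truncCoord hφ he Z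
  refine ⟨Z, hZ, hereditarilyIndecomposable_of_approx_zigzag fun f hf ↦ ?_, _,
    isTopologicalBasis_range_of_denseRange hdense, mk_range_le.trans (by simp)⟩
  obtain ⟨j, hj⟩ := hdense.exists_dist_lt f one_pos
  refine ⟨⟨fun z ↦ z.1.2 j, by fun_prop⟩, fun z ↦ ?_⟩
  calc |zigzag (z.1.2 j) - f z| = |clampTwo (q j z) - f z| := by rw [hzigzag z z.2 j]; rfl
    _ ≤ |q j z - f z| := abs_clampTwo_sub_le (hf z)
    _ ≤ dist ((q j).restrict Z) f :=
      ContinuousMap.dist_apply_le_dist (f := (q j).restrict Z) (g := f) z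
    _ < 1 := by rwa [dist_comm]

end Cover

/-- For every infinite cardinal `κ` there is a hereditarily indecomposable continuum
of weight exactly `κ`: it has a base of cardinality `κ` and no basis of smaller
cardinality. -/
theorem exists_hereditarilyIndecomposable_continuum_of_weight
    (κ : Cardinal.{u}) (hκ : Cardinal.aleph0 ≤ κ) :
    ∃ (X : Type u) (tX : TopologicalSpace X),
      @CompactSpace X tX ∧ @T2Space X tX ∧ @ConnectedSpace X tX ∧ Nonempty X ∧
      @HereditarilyIndecomposable X tX ∧
      (∃ B : Set (Set X), @TopologicalSpace.IsTopologicalBasis X tX B ∧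
        Cardinal.mk B = κ) ∧
      (∀ B : Set (Set X), @TopologicalSpace.IsTopologicalBasis X tX B →
        κ ≤ Cardinal.mk B) := by
  induction κ using Cardinal.inductionOn with | _ ι
  have : Infinite ι := Cardinal.infinite_iff.mpr hκ
  let φ (i : ι) : C(ι → unitInterval, ℝ) := ⟨fun x ↦ x i, by fun_prop⟩
  obtain ⟨Z, hZ, hZ_hi, B, hB, hBι⟩ := exists_hereditarilyIndecomposable_isContinuumOver (φ := φ)
    fun x y hxy ↦ by simpa [φ, Subtype.ext_iff] using ne_iff.mp hxy
  have hweight (B : Set (Set Z)) (hB : TopologicalSpace.IsTopologicalBasis B) :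
      Cardinal.mk ι ≤ Cardinal.mk B :=
    mk_le_mk_of_isTopologicalBasis_of_surjective hB (continuous_fst.comp continuous_subtype_val)
      fun x ↦ by simpa using hZ.surjOn (mem_univ x)
  exact ⟨Z, inferInstance, isCompact_iff_compactSpace.mp hZ.isCompact, inferInstance,
    isConnected_iff_connectedSpace.mp hZ.isConnected, hZ.isConnected.nonempty.to_subtype, hZ_hi,
    ⟨B, hB, hBι.antisymm (hweight B hB)⟩, hweight⟩
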